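/- Let K be a field of characteristic different from 2 and let a, b be nonzero elements of K. Then the following are equivalent: (1) ℍ[K,a,b] is a division ring; (2) the quaternary norm form ⟨1,−a,−b,ab⟩ is anisotropic over K; (3) the ternary pure norm form ⟨−a,−b,ab⟩ is anisotropic over K. -/

import Mathlib

open Quaternion

/-- The quaternary norm form `⟨1, -a, -b, ab⟩` of the quaternion algebra `ℍ[K, a, b]`. -/
noncomputable def quaternionNormForm (K : Type*) [Field K] (a b : K) :
    QuadraticForm K (Fin 4 → K) :=
  QuadraticMap.weightedSumSquares K ![1, -a, -b, a * b]

/-- The ternary pure norm form `⟨-a, -b, ab⟩` of the quaternion algebra `ℍ[K, a, b]`. -/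
noncomputable def quaternionPureNormForm (K : Type*) [Field K] (a b : K) :
    QuadraticForm K (Fin 3 → K) :=
  QuadraticMap.weightedSumSquares K ![-a, -b, a * b]

/-!
Since `x * star x = N x` for the reduced norm `N`, a quaternion is invertible exactly when its norm
is. In coordinates `N` is the quaternary form, and its restriction to the pure quaternions is the
ternary form, so the point is to produce an isotropic pure quaternion from an isotropic quaternion
`x` that is not pure. Put `v = (re x) i - re (x i)`. Then `x * v` is pure of norm `N x * N v = 0`.
If `x * v` vanishes, then so does `N v`, because `x * v * star v = N v • x`, and
`v * j = (re x) k - re (x i) j` is an isotropic pure quaternion.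
-/

section CommRing

variable {R : Type*} [CommRing R]

/-- The reduced norm `x ↦ x * star x` of the quaternion algebra `ℍ[R,c₁,c₂,c₃]`, as a
multiplicative map to the base ring. It generalizes `Quaternion.normSq`. -/
def quaternionNorm {c₁ c₂ c₃ : R} : ℍ[R,c₁,c₂,c₃] →*₀ R where
  toFun x := (x * star x).re
  map_zero' := by rw [zero_mul, QuaternionAlgebra.re_zero]
  map_one' := by rw [star_one, one_mul, QuaternionAlgebra.re_one]
  map_mul' x y := QuaternionAlgebra.coe_injective <| by
    rw [← QuaternionAlgebra.mul_star_eq_coe, star_mul, mul_assoc, ← mul_assoc y,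
      QuaternionAlgebra.mul_star_eq_coe y, QuaternionAlgebra.coe_commutes, ← mul_assoc,
      QuaternionAlgebra.mul_star_eq_coe x, ← QuaternionAlgebra.coe_mul, QuaternionAlgebra.re_coe,
      QuaternionAlgebra.re_coe, QuaternionAlgebra.coe_mul]

namespace quaternionNorm

theorem apply_def {c₁ c₂ c₃ : R} (x : ℍ[R,c₁,c₂,c₃]) : quaternionNorm x = (x * star x).re :=
  rfl

theorem self_mul_star {c₁ c₂ c₃ : R} (x : ℍ[R,c₁,c₂,c₃]) : x * star x = quaternionNorm x :=
  QuaternionAlgebra.mul_star_eq_coe x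

theorem isUnit_iff {c₁ c₂ c₃ : R} {x : ℍ[R,c₁,c₂,c₃]} :
    IsUnit (quaternionNorm x) ↔ IsUnit x := by
  refine ⟨fun hN => ?_, fun hx => hx.map quaternionNorm⟩
  have hprod : IsUnit (x * star x) := by
    rw [self_mul_star]
    exact hN.map (algebraMap R ℍ[R,c₁,c₂,c₃])
  exact ((Commute.isUnit_mul_iff (star_comm_self' x).symm).mp hprod).1

theorem smul {c₁ c₂ c₃ : R} (r : R) (x : ℍ[R,c₁,c₂,c₃]) :
    quaternionNorm (r • x) = r ^ 2 * quaternionNorm x := by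
  rw [apply_def, apply_def, QuaternionAlgebra.star_smul, smul_mul_smul_comm,
    QuaternionAlgebra.re_smul, smul_eq_mul, sq]

theorem smul_eq_zero_of_mul_eq_zero {c₁ c₂ c₃ : R} {x v : ℍ[R,c₁,c₂,c₃]} (h : x * v = 0) :
    quaternionNorm v • x = 0 := by
  rw [← QuaternionAlgebra.mul_coe_eq_smul, ← self_mul_star, ← mul_assoc, h, zero_mul]

variable {a b : R}

theorem eq_weighted_sum_sq (x : ℍ[R,a,b]) :
    quaternionNorm x = x.re ^ 2 - a * x.imI ^ 2 - b * x.imJ ^ 2 + a * b * x.imK ^ 2 := by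
  simp only [apply_def, QuaternionAlgebra.re_mul, QuaternionAlgebra.re_star,
    QuaternionAlgebra.imI_star, QuaternionAlgebra.imJ_star, QuaternionAlgebra.imK_star]
  ring

theorem eq_zero_of_pure_anisotropic
    (hpure : ∀ p : ℍ[R,a,b], p.re = 0 → quaternionNorm p = 0 → p = 0)
    {x : ℍ[R,a,b]} (hx : quaternionNorm x = 0) : x = 0 := by
  let v : ℍ[R,a,b] := ⟨-(a * x.imI), x.re, 0, 0⟩
  let j : ℍ[R,a,b] := ⟨0, 0, 1, 0⟩
  have hxv : x * v = 0 := by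
    refine hpure _ ?_ (by rw [map_mul, hx, zero_mul])
    simp only [QuaternionAlgebra.re_mul, v]
    ring
  have hv : quaternionNorm v * x.re = 0 :=
    congrArg QuaternionAlgebra.re (smul_eq_zero_of_mul_eq_zero hxv)
  have hvj : x.re • (v * j) = 0 := by
    refine hpure _ (by simp [v, j]) ?_
    rw [smul, map_mul]
    linear_combination x.re * quaternionNorm j * hv
  have hre_sq : x.re ^ 2 = 0 := by
    simpa [v, j, sq] using congrArg QuaternionAlgebra.imK hvj
  -- Over a reduced ring this is `x.re = 0`; otherwise `x.re • j` is pure of norm zero.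
  have hre_j : x.re • j = 0 := hpure _ (by simp [j]) (by rw [smul, hre_sq, zero_mul])
  have hre : x.re = 0 := by simpa [j] using congrArg QuaternionAlgebra.imJ hre_j
  exact hpure x hre hx

end quaternionNorm

end CommRing

section Field

variable {K : Type*} [Field K] {a b : K}

theorem forall_isUnit_iff_forall_quaternionNorm_eq_zero :
    (∀ x : ℍ[K,a,b], x ≠ 0 → IsUnit x) ↔ ∀ x : ℍ[K,a,b], quaternionNorm x = 0 → x = 0 := by
  simp only [← quaternionNorm.isUnit_iff, isUnit_iff_ne_zero, ne_eq, not_imp_not]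

theorem quaternionNormForm_linearEquivTuple (x : ℍ[K,a,b]) :
    quaternionNormForm K a b (QuaternionAlgebra.linearEquivTuple a 0 b x) = quaternionNorm x := by
  simp only [quaternionNormForm, QuadraticMap.weightedSumSquares_apply, Fin.sum_univ_four,
    QuaternionAlgebra.coe_linearEquivTuple, QuaternionAlgebra.equivTuple_apply, Matrix.cons_val,
    smul_eq_mul, quaternionNorm.eq_weighted_sum_sq]
  ring

theorem quaternionPureNormForm_apply (v : Fin 3 → K) :
    quaternionPureNormForm K a b v = quaternionNorm (⟨0, v 0, v 1, v 2⟩ : ℍ[K,a,b]) := by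
  simp only [quaternionPureNormForm, QuadraticMap.weightedSumSquares_apply, Fin.sum_univ_three,
    Matrix.cons_val, smul_eq_mul, quaternionNorm.eq_weighted_sum_sq]
  ring

theorem quaternionNormForm_anisotropic_iff :
    (quaternionNormForm K a b).Anisotropic ↔
      ∀ x : ℍ[K,a,b], quaternionNorm x = 0 → x = 0 :=
  ((QuaternionAlgebra.linearEquivTuple a 0 b).toEquiv.forall_congr fun x => by
    rw [LinearEquiv.coe_toEquiv, quaternionNormForm_linearEquivTuple, map_eq_zero_iff _
      (LinearEquiv.injective _)]).symm

theorem quaternionPureNormForm_anisotropic_iff :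
    (quaternionPureNormForm K a b).Anisotropic ↔
      ∀ x : ℍ[K,a,b], x.re = 0 → quaternionNorm x = 0 → x = 0 := by
  constructor
  · rintro h ⟨x, y, z, w⟩ rfl hN
    have hv : ![y, z, w] = 0 := h _ ((quaternionPureNormForm_apply _).trans hN)
    ext
    exacts [rfl, congrFun hv 0, congrFun hv 1, congrFun hv 2]
  · intro h v hv
    have hx := h ⟨0, v 0, v 1, v 2⟩ rfl ((quaternionPureNormForm_apply v).symm.trans hv)
    simpa [funext_iff, Fin.forall_fin_succ, QuaternionAlgebra.ext_iff] using hx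

end Field

theorem stmt_1_general (K : Type*) [Field K] (a b : K) :
    List.TFAE
      [∀ x : ℍ[K,a,b], x ≠ 0 → IsUnit x,
       (quaternionNormForm K a b).Anisotropic,
       (quaternionPureNormForm K a b).Anisotropic] := by
  rw [forall_isUnit_iff_forall_quaternionNorm_eq_zero, quaternionNormForm_anisotropic_iff,
    quaternionPureNormForm_anisotropic_iff]
  tfae_have 1 ↔ 2 := Iff.rfl
  tfae_have 2 → 3 := fun h x _ => h x
  tfae_have 3 → 2 := fun h _ => quaternionNorm.eq_zero_of_pure_anisotropic h
  tfae_finish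

theorem stmt_1 (K : Type*) [Field K] (hK : ringChar K ≠ 2)
    (a b : K) (ha : a ≠ 0) (hb : b ≠ 0) :
    List.TFAE
      [∀ x : ℍ[K, a, b], x ≠ 0 → IsUnit x,
       (quaternionNormForm K a b).Anisotropic,
       (quaternionPureNormForm K a b).Anisotropic] :=
  stmt_1_general K a b
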